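/- arXiv:math/0702124 — 3 statements merged into one kernel-verified Lean document; each statement's English description precedes it below -/
import Mathlib

section
/- Let M be a metric tree containing at least two distinct points. Then the Lifschitz characteristic of M equals 2, i.e., κ(M) = 2. -/
/-- `S` is a metric segment from `x` to `y` in a metric space: `S` contains `x` and `y`, and
the map `z ↦ dist x z` is an isometry from `S` onto the real interval `[0, dist x y]`. -/
def IsMetricSegment {X : Type*} [MetricSpace X] (S : Set X) (x y : X) : Prop :=
  x ∈ S ∧ y ∈ S ∧
    (∀ z ∈ S, ∀ w ∈ S, |dist x z - dist x w| = dist z w) ∧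
    (fun z => dist x z) '' S = Set.Icc 0 (dist x y)

/-- A metric tree structure on a metric space `M`: every pair of points is joined by a unique
metric segment `seg x y`, and if `[x,z] ∩ [z,y] = {z}` then `[x,z] ∪ [z,y] = [x,y]`. -/
structure MetricTree (M : Type*) [MetricSpace M] where
  seg : M → M → Set M
  seg_isSegment : ∀ x y : M, IsMetricSegment (seg x y) x y
  seg_unique : ∀ x y : M, ∀ S : Set M, IsMetricSegment S x y → S = seg x y
  seg_glue : ∀ x y z : M, seg x z ∩ seg z y = {z} → seg x z ∪ seg z y = seg x y

/-- The set (Kuratowski) measure of noncompactness of `A`: the infimum of all `b > 0` such that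
`A` admits a finite cover by subsets of `A` of diameter at most `b`. -/
noncomputable def setMNC {X : Type*} [MetricSpace X] (A : Set X) : ℝ :=
  sInf {b : ℝ | 0 < b ∧ ∃ (n : ℕ) (E : Fin n → Set X),
    (∀ j, E j ⊆ A) ∧ (∀ j, Metric.diam (E j) ≤ b) ∧ A ⊆ ⋃ j, E j}

/-- The ball (Hausdorff) measure of noncompactness of `A`: the infimum of all `b > 0` such that
`A` admits a finite cover by open balls of radius `b` centered in the ambient space. -/
noncomputable def ballMNC {X : Type*} [MetricSpace X] (A : Set X) : ℝ :=
  sInf {b : ℝ | 0 < b ∧ ∃ (n : ℕ) (c : Fin n → X), A ⊆ ⋃ j, Metric.ball (c j) b}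

/-- The diameter-based ball measure of noncompactness of `A`: the infimum of all `b > 0` such
that `A` admits a finite cover by open balls each of diameter at most `b`. -/
noncomputable def ballDiamMNC {X : Type*} [MetricSpace X] (A : Set X) : ℝ :=
  sInf {b : ℝ | 0 < b ∧ ∃ (n : ℕ) (c : Fin n → X) (r : Fin n → ℝ),
    (∀ j, Metric.diam (Metric.ball (c j) (r j)) ≤ b) ∧ A ⊆ ⋃ j, Metric.ball (c j) (r j)}

/-- `b > 0` is Lifschitz for `X` iff there is `a > 1` such that whenever `dist x y > r > 0`,
some closed ball of radius `r` contains `closedBall x (a*r) ∩ closedBall y (b*r)`. -/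
def IsLifschitz (X : Type*) [MetricSpace X] (b : ℝ) : Prop :=
  0 < b ∧ ∃ a : ℝ, 1 < a ∧ ∀ x y : X, ∀ r : ℝ, 0 < r → r < dist x y →
    ∃ z : X, Metric.closedBall x (a * r) ∩ Metric.closedBall y (b * r) ⊆ Metric.closedBall z r

/-- The Lifschitz characteristic of `X`: the supremum of all `b` Lifschitz for `X`. -/
noncomputable def lifschitzChar (X : Type*) [MetricSpace X] : ℝ :=
  sSup {b : ℝ | IsLifschitz X b}

/-!
Let `z` lie on the segment `[x, y]` of a metric tree. Every point `p` is joined to `x` or to `y` by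
a segment through `z`: otherwise the segments from `z` to `x`, `p` and `y` would all start out in
the same direction, and `z` could be bypassed on the way from `x` to `y`. Hence the balls around `x`
and `y` of radii `dist x z + r` and `dist y z + r` meet inside the ball of radius `r` around `z`,
and taking `z` close to `x` shows that every positive `b < 2` is Lifschitz.

Conversely, if `x` is the midpoint of `u` and `y`, then for `b > 2` and `r` slightly below
`dist x y` the balls around `x` and `y` share the points `u` and `y`, which are more than `2 * r`
apart.
-/

open Metric Set

namespace IsMetricSegment

variable {X : Type*} [MetricSpace X] {S : Set X} {x y z w : X} {t : ℝ}

theorem dist_add_dist (hS : IsMetricSegment S x y) (hz : z ∈ S) :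
    dist x z + dist z y = dist x y := by
  obtain ⟨-, hy, hiso, himage⟩ := hS
  have hle : dist x z ≤ dist x y := (himage.subset (mem_image_of_mem _ hz)).2
  have hzy : |dist x z - dist x y| = dist z y := hiso z hz y hy
  rw [abs_of_nonpos (sub_nonpos.2 hle)] at hzy
  linarith

theorem exists_dist_eq (hS : IsMetricSegment S x y) (ht : t ∈ Icc 0 (dist x y)) :
    ∃ z ∈ S, dist x z = t :=
  hS.2.2.2.superset ht

theorem dist_lt_dist_add_dist (hS : IsMetricSegment S x y) (hz : z ∈ S) (hw : w ∈ S)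
    (hzx : z ≠ x) (hwx : w ≠ x) : dist z w < dist z x + dist x w := by
  rw [← hS.2.2.1 z hz w hw, dist_comm z x, abs_sub_lt_iff]
  have hz_pos : 0 < dist x z := dist_pos.2 hzx.symm
  have hw_pos : 0 < dist x w := dist_pos.2 hwx.symm
  constructor <;> linarith

end IsMetricSegment

namespace MetricTree

variable {M : Type*} [MetricSpace M] (T : MetricTree M) {x y z : M}

theorem dist_add_dist_of_mem_seg (hz : z ∈ T.seg x y) : dist x z + dist z y = dist x y :=
  (T.seg_isSegment x y).dist_add_dist hz

theorem exists_mem_seg_inter_seg_ne (h : dist x z + dist z y ≠ dist x y) :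
    ∃ w ∈ T.seg x z ∩ T.seg z y, w ≠ z := by
  have hz : z ∈ T.seg x z ∩ T.seg z y := ⟨(T.seg_isSegment x z).2.1, (T.seg_isSegment z y).1⟩
  by_contra! hsub
  have hglue : T.seg x z ∪ T.seg z y = T.seg x y :=
    T.seg_glue x y z (eq_singleton_iff_unique_mem.2 ⟨hz, hsub⟩)
  exact h (T.dist_add_dist_of_mem_seg (hglue.subset (Or.inl hz.1)))

theorem dist_add_dist_eq_or_of_mem_seg (hz : z ∈ T.seg x y) (p : M) :
    dist x z + dist z p = dist x p ∨ dist y z + dist z p = dist y p := by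
  by_contra! hne
  obtain ⟨w, ⟨hw, hwp⟩, hwz⟩ := T.exists_mem_seg_inter_seg_ne hne.1
  obtain ⟨v, ⟨hv, hvp⟩, hvz⟩ := T.exists_mem_seg_inter_seg_ne hne.2
  have hxz := T.dist_add_dist_of_mem_seg hw
  have hyz := T.dist_add_dist_of_mem_seg hv
  have hwv := (T.seg_isSegment z p).dist_lt_dist_add_dist hwp hvp hwz hvz
  have hlt : dist x y < dist x y :=
    calc dist x y ≤ dist x w + dist w v + dist v y := dist_triangle4 x w v y
      _ < dist x w + (dist w z + dist z v) + dist v y := by gcongr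
      _ = dist x z + dist z y := by
        rw [← hxz, dist_comm z y, ← hyz, dist_comm z v, dist_comm v y]
        ring
      _ = dist x y := T.dist_add_dist_of_mem_seg hz
  exact hlt.false

theorem closedBall_inter_closedBall_subset (hz : z ∈ T.seg x y) (r : ℝ) :
    closedBall x (dist x z + r) ∩ closedBall y (dist y z + r) ⊆ closedBall z r := by
  rintro p ⟨hpx, hpy⟩
  rw [mem_closedBall'] at hpx hpy ⊢
  rcases T.dist_add_dist_eq_or_of_mem_seg hz p with h | h <;> linarith

include T in
theorem isLifschitz_of_lt_two {b : ℝ} (hb₀ : 0 < b) (hb₂ : b < 2) : IsLifschitz M b := by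
  obtain ⟨ε, hε₀, hε⟩ : ∃ ε, 0 < ε ∧ ε < min 1 (2 - b) :=
    exists_between (lt_min one_pos (sub_pos.2 hb₂))
  obtain ⟨hε₁, hεb⟩ := lt_min_iff.1 hε
  refine ⟨hb₀, 1 + ε, by linarith, fun x y r hr hxy => ?_⟩
  have hεr : ε * r ≤ r := mul_le_of_le_one_left hr.le hε₁.le
  obtain ⟨z, hz, hxz⟩ :=
    (T.seg_isSegment x y).exists_dist_eq ⟨(mul_pos hε₀ hr).le, hεr.trans hxy.le⟩
  have hyz : dist y z = dist x y - ε * r := by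
    linarith [T.dist_add_dist_of_mem_seg hz, dist_comm y z]
  have hbr : b * r ≤ (2 - ε) * r := by gcongr; linarith
  refine ⟨z, (inter_subset_inter ?_ ?_).trans (T.closedBall_inter_closedBall_subset hz r)⟩
  · exact closedBall_subset_closedBall (by linarith)
  · exact closedBall_subset_closedBall (by linarith)

include T in
theorem exists_midpoint (x y : M) : ∃ m, dist m x = dist m y ∧ dist x y = 2 * dist m y := by
  have hdist := dist_nonneg (x := x) (y := y)
  obtain ⟨m, hm, hxm⟩ := (T.seg_isSegment x y).exists_dist_eq
    (t := dist x y / 2) ⟨by linarith, by linarith⟩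
  have hadd := T.dist_add_dist_of_mem_seg hm
  exact ⟨m, by linarith [dist_comm m x], by linarith⟩

end MetricTree

theorem IsLifschitz.le_two_of_midpoint {X : Type*} [MetricSpace X] {b : ℝ}
    (hb : IsLifschitz X b) {u x y : X} (huy : u ≠ y) (hxu : dist x u = dist x y)
    (hdist : dist u y = 2 * dist x y) : b ≤ 2 := by
  obtain ⟨hb₀, a, ha, hball⟩ := hb
  by_contra! hb₂
  have hR : 0 < dist x y := by linarith [dist_pos.2 huy]
  have ha₀ : 0 < a := one_pos.trans ha
  have h2R : 2 * dist x y / b < dist x y := (div_lt_iff₀' hb₀).2 (by gcongr)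
  obtain ⟨r, hr, hrR⟩ := exists_between (max_lt (div_lt_self hR ha) h2R)
  obtain ⟨har, hbr⟩ := max_lt_iff.1 hr
  have hr₀ : 0 < r := (div_pos hR ha₀).trans har
  rw [div_lt_iff₀' ha₀] at har
  rw [div_lt_iff₀' hb₀] at hbr
  obtain ⟨z, hz⟩ := hball x y r hr₀ hrR
  have hu : u ∈ closedBall z r :=
    hz ⟨mem_closedBall'.2 (hxu.trans_le har.le), mem_closedBall.2 (hdist.trans_le hbr.le)⟩
  have hy : y ∈ closedBall z r :=
    hz ⟨mem_closedBall'.2 har.le, mem_closedBall_self (mul_pos hb₀ hr₀).le⟩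
  linarith [dist_triangle_right u y z, mem_closedBall.1 hu, mem_closedBall.1 hy]

theorem stmt_1 {M : Type*} [MetricSpace M] (T : MetricTree M)
    (h : ∃ x y : M, x ≠ y) :
    lifschitzChar M = 2 := by
  obtain ⟨u, y, huy⟩ := h
  obtain ⟨x, hxu, hdist⟩ := T.exists_midpoint u y
  have hlower : Ioo 0 2 ⊆ {b : ℝ | IsLifschitz M b} := fun _ hb =>
    T.isLifschitz_of_lt_two hb.1 hb.2
  have hupper : {b : ℝ | IsLifschitz M b} ⊆ Iic 2 := fun _ hb =>
    hb.le_two_of_midpoint huy hxu hdist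
  have hlub : IsLUB {b : ℝ | IsLifschitz M b} 2 :=
    (isLUB_Ioo two_pos).of_subset_of_superset isLUB_Iic hlower hupper
  exact hlub.csSup_eq ((nonempty_Ioo.2 two_pos).mono hlower)
end

section
/- Let M be a metric space, let A ⊆ M be bounded, and let b > 0 be Lifschitz for M. Then b·β(A) ≤ α(A); consequently κ(M)·β(A) ≤ α(A) whenever the Lifschitz characteristic κ(M) is finite. -/
/-!
Suppose `A` is covered by finitely many sets of diameter at most `b * r` and by finitely many balls
of radius at most `a * r`, where `a > 1` witnesses that `b` is Lifschitz. A piece of the first cover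
meets a ball of the second one in a subset of a single closed ball of radius `r`, so
`ballMNC A ≤ r`. Hence `ballMNC A ≤ max (setMNC A / b) (ballMNC A / a)`, and as `a > 1` the maximum
must be attained by its first term.
-/

section

variable {X : Type*} [MetricSpace X] {A : Set X} {b r : ℝ}

theorem setMNC_nonneg (A : Set X) : 0 ≤ setMNC A :=
  Real.sInf_nonneg fun _ h => h.1.le

theorem ballMNC_nonneg (A : Set X) : 0 ≤ ballMNC A :=
  Real.sInf_nonneg fun _ h => h.1.le

theorem ballMNC_le_of_subset_iUnion_closedBall {ι : Type*} [Finite ι] (hr : 0 ≤ r) (c : ι → X)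
    (h : A ⊆ ⋃ i, Metric.closedBall (c i) r) : ballMNC A ≤ r := by
  obtain ⟨n, ⟨e⟩⟩ := Finite.exists_equiv_fin ι
  refine le_of_forall_gt_imp_ge_of_dense fun s hrs => ?_
  have hcover : A ⊆ ⋃ j, Metric.ball (c (e.symm j)) s :=
    calc A ⊆ ⋃ i, Metric.closedBall (c i) r := h
      _ ⊆ ⋃ i, Metric.ball (c i) s :=
        Set.iUnion_mono fun i => Metric.closedBall_subset_ball hrs
      _ = ⋃ j, Metric.ball (c (e.symm j)) s :=
        (e.symm.surjective.iUnion_comp fun i => Metric.ball (c i) s).symm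
  exact csInf_le ⟨0, fun _ ht => ht.1.le⟩ ⟨hr.trans_lt hrs, n, fun j => c (e.symm j), hcover⟩

theorem exists_subset_iUnion_ball_of_ballMNC_lt (hA : Bornology.IsBounded A)
    (h : ballMNC A < r) : ∃ (n : ℕ) (c : Fin n → X), A ⊆ ⋃ j, Metric.ball (c j) r := by
  have hne : {s : ℝ | 0 < s ∧ ∃ (n : ℕ) (c : Fin n → X),
      A ⊆ ⋃ j, Metric.ball (c j) s}.Nonempty := by
    rcases A.eq_empty_or_nonempty with rfl | ⟨x, -⟩
    · exact ⟨1, one_pos, 0, Fin.elim0, Set.empty_subset _⟩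
    · obtain ⟨R, hR, hAR⟩ := hA.subset_ball_lt 0 x
      exact ⟨R, hR, 1, fun _ => x,
        hAR.trans (Set.subset_iUnion (fun _ : Fin 1 => Metric.ball x R) 0)⟩
  obtain ⟨s, ⟨-, n, c, hc⟩, hsr⟩ := exists_lt_of_csInf_lt hne h
  exact ⟨n, c, hc.trans (Set.iUnion_mono fun j => Metric.ball_subset_ball hsr.le)⟩

theorem exists_subset_iUnion_diam_le_of_setMNC_lt (h : setMNC A < r) :
    ∃ (n : ℕ) (E : Fin n → Set X),
      (∀ j, E j ⊆ A) ∧ (∀ j, Metric.diam (E j) ≤ r) ∧ A ⊆ ⋃ j, E j := by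
  have hne : {s : ℝ | 0 < s ∧ ∃ (n : ℕ) (E : Fin n → Set X),
      (∀ j, E j ⊆ A) ∧ (∀ j, Metric.diam (E j) ≤ s) ∧ A ⊆ ⋃ j, E j}.Nonempty :=
    ⟨Metric.diam A + 1, add_pos_of_nonneg_of_pos Metric.diam_nonneg one_pos, 1, fun _ => A,
      fun _ => subset_rfl, fun _ => le_add_of_nonneg_right zero_le_one,
      Set.subset_iUnion (fun _ : Fin 1 => A) 0⟩
  obtain ⟨s, ⟨-, n, E, hEA, hdiam, hcover⟩, hsr⟩ := exists_lt_of_csInf_lt hne h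
  exact ⟨n, E, hEA, fun j => (hdiam j).trans hsr.le, hcover⟩

namespace IsLifschitz

theorem exists_inter_closedBall_subset_closedBall (hb : IsLifschitz X b) :
    ∃ a : ℝ, 1 < a ∧ ∀ (E : Set X) (x : X) (r : ℝ), 0 < r → Bornology.IsBounded E →
      Metric.diam E ≤ b * r → ∃ z : X, E ∩ Metric.closedBall x (a * r) ⊆ Metric.closedBall z r := by
  obtain ⟨-, a, ha, hcenter⟩ := hb
  refine ⟨a, ha, fun E x r hr hE hdiam => ?_⟩
  by_cases hfar : ∃ y ∈ E, r < dist x y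
  · obtain ⟨y, hyE, hxy⟩ := hfar
    have hEy : E ⊆ Metric.closedBall y (b * r) := fun w hw =>
      (Metric.dist_le_diam_of_mem hE hw hyE).trans hdiam
    obtain ⟨z, hz⟩ := hcenter x y r hr hxy
    exact ⟨z, fun w hw => hz ⟨hw.2, hEy hw.1⟩⟩
  · push Not at hfar
    exact ⟨x, fun w hw => Metric.mem_closedBall'.2 (hfar w hw.1)⟩

theorem exists_ballMNC_le_max (hb : IsLifschitz X b) :
    ∃ a : ℝ, 1 < a ∧ ∀ A : Set X, Bornology.IsBounded A →
      ballMNC A ≤ max (setMNC A / b) (ballMNC A / a) := by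
  obtain ⟨a, ha, hcenter⟩ := hb.exists_inter_closedBall_subset_closedBall
  refine ⟨a, ha, fun A hA => le_of_forall_gt_imp_ge_of_dense fun r hr => ?_⟩
  obtain ⟨hαr, hβr⟩ := max_lt_iff.1 hr
  have hr₀ : 0 < r := (div_nonneg (setMNC_nonneg A) hb.1.le).trans_lt hαr
  obtain ⟨m, E, hEA, hdiam, hAE⟩ :=
    exists_subset_iUnion_diam_le_of_setMNC_lt ((div_lt_iff₀' hb.1).1 hαr)
  obtain ⟨n, c, hAc⟩ :=
    exists_subset_iUnion_ball_of_ballMNC_lt hA ((div_lt_iff₀' (one_pos.trans ha)).1 hβr)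
  choose z hz using fun p : Fin m × Fin n =>
    hcenter (E p.1) (c p.2) r hr₀ (hA.subset (hEA p.1)) (hdiam p.1)
  refine ballMNC_le_of_subset_iUnion_closedBall hr₀.le z fun x hx => ?_
  obtain ⟨j, hj⟩ := Set.mem_iUnion.1 (hAE hx)
  obtain ⟨i, hi⟩ := Set.mem_iUnion.1 (hAc hx)
  exact Set.mem_iUnion.2 ⟨(j, i), hz (j, i) ⟨hj, Metric.ball_subset_closedBall hi⟩⟩

theorem mul_ballMNC_le_setMNC (hb : IsLifschitz X b) (hA : Bornology.IsBounded A) :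
    b * ballMNC A ≤ setMNC A := by
  obtain ⟨a, ha, hmax⟩ := hb.exists_ballMNC_le_max
  rcases (ballMNC_nonneg A).eq_or_lt with hβ | hβ
  · rw [← hβ, mul_zero]
    exact setMNC_nonneg A
  · have hshrink : ballMNC A / a < ballMNC A := div_lt_self hβ ha
    have hle : ballMNC A ≤ setMNC A / b := (le_max_iff.1 (hmax A hA)).resolve_right hshrink.not_ge
    exact (le_div_iff₀' hb.1).1 hle

end IsLifschitz

theorem lifschitzChar_mul_ballMNC_le_setMNC (hA : Bornology.IsBounded A) :
    lifschitzChar X * ballMNC A ≤ setMNC A := by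
  rcases (ballMNC_nonneg A).eq_or_lt with hβ | hβ
  · rw [← hβ, mul_zero]
    exact setMNC_nonneg A
  · refine (le_div_iff₀ hβ).1 (Real.sSup_le (fun c hc => ?_) (div_nonneg (setMNC_nonneg A) hβ.le))
    exact (le_div_iff₀ hβ).2 (hc.mul_ballMNC_le_setMNC hA)

end

theorem stmt_8 {M : Type*} [MetricSpace M] (A : Set M) (hA : Bornology.IsBounded A)
    (b : ℝ) (hb : IsLifschitz M b) :
    b * ballMNC A ≤ setMNC A ∧
    (BddAbove {c : ℝ | IsLifschitz M c} → lifschitzChar M * ballMNC A ≤ setMNC A) :=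
  ⟨hb.mul_ballMNC_le_setMNC hA, fun _ => lifschitzChar_mul_ballMNC_le_setMNC hA⟩
end

section
/- Let (X,d) be a metric space, let a, p, b ∈ X, let S₁ be a metric segment from a to p and S₂ a metric segment from p to b. Then S₁ ∪ S₂ is a metric segment from a to b if and only if p is between a and b, i.e., d(a,b) = d(a,p) + d(p,b). -/
/-!
Distances from the endpoint `a` of a segment are additive along it. If `p` is between `a` and `b`,
every path `a, z, p, w, b` with `z ∈ S₁` and `w ∈ S₂` has length exactly `dist a b`, so no triangle
inequality along it can be strict. Thus `dist a` restricted to `S₂` is `dist p` shifted by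
`dist a p`, and the intervals covered by `S₁` and `S₂` are adjacent.
-/

theorem dist_eq_add_of_between {X : Type*} [PseudoMetricSpace X] {a z p w b : X}
    (hp : dist a b = dist a p + dist p b) (hz : dist a p = dist a z + dist z p)
    (hw : dist p b = dist p w + dist w b) : dist z w = dist z p + dist p w := by
  refine le_antisymm (dist_triangle z p w) ?_
  linarith [dist_triangle4 a z w b]

namespace IsMetricSegment

variable {X : Type*} [MetricSpace X] {S S₁ S₂ : Set X} {a p b x y z w : X}

theorem left_mem (h : IsMetricSegment S x y) : x ∈ S := h.1

theorem right_mem (h : IsMetricSegment S x y) : y ∈ S := h.2.1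

theorem abs_dist_sub_dist (h : IsMetricSegment S x y) (hz : z ∈ S) (hw : w ∈ S) :
    |dist x z - dist x w| = dist z w :=
  h.2.2.1 z hz w hw

theorem image_dist_left (h : IsMetricSegment S x y) :
    (fun z => dist x z) '' S = Set.Icc 0 (dist x y) :=
  h.2.2.2

theorem dist_left_le (h : IsMetricSegment S x y) (hz : z ∈ S) : dist x z ≤ dist x y := by
  have hmem : dist x z ∈ Set.Icc 0 (dist x y) := h.image_dist_left ▸ Set.mem_image_of_mem _ hz
  exact hmem.2

theorem dist_eq_add (h : IsMetricSegment S x y) (hz : z ∈ S) :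
    dist x y = dist x z + dist z y := by
  have hzy := h.abs_dist_sub_dist hz h.right_mem
  rw [abs_of_nonpos (sub_nonpos.2 (h.dist_left_le hz))] at hzy
  linarith

theorem dist_eq_add_of_mem_of_mem (h₁ : IsMetricSegment S₁ a p) (h₂ : IsMetricSegment S₂ p b)
    (hp : dist a b = dist a p + dist p b) (hz : z ∈ S₁) (hw : w ∈ S₂) :
    dist z w = dist z p + dist p w :=
  dist_eq_add_of_between hp (h₁.dist_eq_add hz) (h₂.dist_eq_add hw)

theorem abs_dist_sub_dist_of_mem_of_mem (h₁ : IsMetricSegment S₁ a p)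
    (h₂ : IsMetricSegment S₂ p b) (hp : dist a b = dist a p + dist p b)
    (hz : z ∈ S₁) (hw : w ∈ S₂) : |dist a z - dist a w| = dist z w := by
  have haw := h₁.dist_eq_add_of_mem_of_mem h₂ hp h₁.left_mem hw
  have hzw := h₁.dist_eq_add_of_mem_of_mem h₂ hp hz hw
  have hadd : dist a w = dist a z + dist z w := by linarith [h₁.dist_eq_add hz]
  rw [hadd, sub_add_cancel_left, abs_neg, abs_of_nonneg dist_nonneg]

theorem abs_dist_sub_dist_union (h₁ : IsMetricSegment S₁ a p) (h₂ : IsMetricSegment S₂ p b)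
    (hp : dist a b = dist a p + dist p b) (hz : z ∈ S₁ ∪ S₂) (hw : w ∈ S₁ ∪ S₂) :
    |dist a z - dist a w| = dist z w := by
  rcases hz with hz | hz <;> rcases hw with hw | hw
  · exact h₁.abs_dist_sub_dist hz hw
  · exact h₁.abs_dist_sub_dist_of_mem_of_mem h₂ hp hz hw
  · rw [abs_sub_comm, dist_comm z w]
    exact h₁.abs_dist_sub_dist_of_mem_of_mem h₂ hp hw hz
  · rw [h₁.dist_eq_add_of_mem_of_mem h₂ hp h₁.left_mem hz,
      h₁.dist_eq_add_of_mem_of_mem h₂ hp h₁.left_mem hw, add_sub_add_left_eq_sub,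
      h₂.abs_dist_sub_dist hz hw]

theorem image_dist_union (h₁ : IsMetricSegment S₁ a p) (h₂ : IsMetricSegment S₂ p b)
    (hp : dist a b = dist a p + dist p b) :
    (fun z => dist a z) '' (S₁ ∪ S₂) = Set.Icc 0 (dist a b) := by
  have image_right : (fun z => dist a z) '' S₂ = Set.Icc (dist a p) (dist a b) := calc
    (fun z => dist a z) '' S₂ = (fun z => dist a p + dist p z) '' S₂ :=
      Set.image_congr fun _ hz => h₁.dist_eq_add_of_mem_of_mem h₂ hp h₁.left_mem hz
    _ = (fun t => dist a p + t) '' ((fun z => dist p z) '' S₂) := (Set.image_image _ _ _).symm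
    _ = Set.Icc (dist a p) (dist a b) := by
      rw [h₂.image_dist_left, Set.image_const_add_Icc, add_zero, hp]
  have hpb : dist a p ≤ dist a b := hp ▸ le_add_of_nonneg_right dist_nonneg
  rw [Set.image_union, h₁.image_dist_left, image_right,
    Set.Icc_union_Icc_eq_Icc dist_nonneg hpb]

theorem union (h₁ : IsMetricSegment S₁ a p) (h₂ : IsMetricSegment S₂ p b)
    (hp : dist a b = dist a p + dist p b) : IsMetricSegment (S₁ ∪ S₂) a b :=
  ⟨Or.inl h₁.left_mem, Or.inr h₂.right_mem,
    fun _ hz _ hw => h₁.abs_dist_sub_dist_union h₂ hp hz hw, h₁.image_dist_union h₂ hp⟩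

end IsMetricSegment

theorem stmt_19 {X : Type*} [MetricSpace X] (a p b : X) (S₁ S₂ : Set X)
    (h1 : IsMetricSegment S₁ a p) (h2 : IsMetricSegment S₂ p b) :
    IsMetricSegment (S₁ ∪ S₂) a b ↔ dist a b = dist a p + dist p b :=
  ⟨fun h => h.dist_eq_add (Or.inl h1.right_mem), h1.union h2⟩
end
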